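/- arXiv:nlin/0406035 — 2 statements merged into one kernel-verified Lean document; each statement's English description precedes it below -/
import Mathlib

section
/- Let φ, ψ : ℂ → ℂ be entire (differentiable over ℂ everywhere, hence infinitely differentiable) functions. Define sequences a_n, b_n : ℂ → ℂ by a_0 = φ, a_n = a_{n-1}' + ψ·(∑_{i+j=n-2, i,j≥0} a_i a_j) for n ≥ 1, and b_0 = ψ, b_n = b_{n-1}' + φ·(∑_{i+j=n-2, i,j≥0} b_i b_j) for n ≥ 1. For N ∈ ℤ define the Hankel determinant τ_N : ℂ → ℂ by τ_N = det(a_{i+j})_{0≤i,j≤N-1} for N > 0, τ_0 = 1, and τ_N = det(b_{i+j})_{0≤i,j≤|N|-1} for N < 0. Then for every N ∈ ℤ and every x ∈ ℂ, the Toda equation holds: τ_N''(x)·τ_N(x) − (τ_N'(x))² = τ_{N+1}(x)·τ_{N-1}(x) − φ(x)ψ(x)·τ_N(x)². -/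
/-!
Fix one side of the hierarchy and let `'` be the derivation. Let `H` be the Hankel matrix of size
`n + 2`, `S` the upper shift, and `L` the strictly lower triangular Toeplitz matrix with entries
`a_{i-1-j}`. Splitting the convolution `∑ a_k a_{i+j-1-k}` at `k = i` turns the recursion into
`H' = (S - ψ L) H - ψ H Lᵀ`, valid in every row but the last one.

If `M' = X M + M Y`, then `(adj M)' = (tr X + tr Y) adj M - adj M X - Y adj M`; and since the last
column of `adj M` does not involve the last row of `M`, it is enough for that column to know `M'`
outside the last row. With `p` the last and `q` the penultimate index, this yields
`(adj H)_pp' = -(adj H)_qp` and `(adj H)_qp' = -(adj H)_qq + φ ψ (adj H)_pp`. As `(adj H)_pp` is the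
Hankel determinant of size `n + 1`, the Toda equation becomes the Desnanot–Jacobi identity for `H`.
-/

open Matrix Finset
open scoped ContDiff DualNumber

section Adjugate

variable {k R m n : Type*} [CommRing R] [Fintype m] [DecidableEq m] [Fintype n] [DecidableEq n]

/-- The ring homomorphism `a ↦ a + D a ε` into the dual numbers attached to a derivation `D`. It
turns identities between determinants into differentiation formulas. -/
def dualNumberLift [CommSemiring k] [Algebra k R] (D : Derivation k R R) : R →+* R[ε] where
  toFun a := TrivSqZeroExt.inl a + TrivSqZeroExt.inr (D a)
  map_one' := by simp
  map_mul' a b := by ext <;> simp [mul_comm]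
  map_zero' := by simp
  map_add' a b := by ext <;> simp

theorem adjugate_one_add_smul {e : R} (he : e ^ 2 = 0) (X : Matrix n n R) :
    (1 + e • X).adjugate = 1 + e • (X.trace • 1 - X) := by
  have inverse : (1 + e • X) * (1 - e • X) = 1 := by
    rw [← (Commute.one_left (e • X)).sq_sub_sq, smul_pow, he, zero_smul, one_pow, sub_zero]
  calc (1 + e • X).adjugate
      = (1 + e • X).adjugate * (1 + e • X) * (1 - e • X) := by
        rw [Matrix.mul_assoc, inverse, Matrix.mul_one]
    _ = (1 + X.trace * e) • (1 - e • X) := by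
        rw [adjugate_mul, det_one_add_smul, he, mul_zero, add_zero, smul_mul, Matrix.one_mul]
    _ = 1 + e • (X.trace • 1 - X) := by
        ext i j
        simp only [Matrix.smul_apply, Matrix.sub_apply, Matrix.add_apply, smul_eq_mul]
        linear_combination -X.trace * X i j * he

theorem adjugate_one_add_smul_mul_mul {e : R} (he : e ^ 2 = 0) (A X Y : Matrix n n R) :
    ((1 + e • X) * A * (1 + e • Y)).adjugate =
      A.adjugate + e • ((X.trace + Y.trace) • A.adjugate - (A.adjugate * X + Y * A.adjugate)) := by
  have mul_self_eq : e * e = 0 := by rw [← sq, he]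
  rw [adjugate_mul_distrib, adjugate_mul_distrib, adjugate_one_add_smul he,
    adjugate_one_add_smul he]
  simp only [Matrix.add_mul, Matrix.mul_add, Matrix.sub_mul, Matrix.mul_sub, smul_mul_assoc,
    mul_smul_comm, Matrix.one_mul, Matrix.mul_one, smul_add, smul_sub, smul_smul, ← mul_assoc,
    mul_self_eq, zero_mul, zero_smul, mul_right_comm e _ e]
  module

theorem adjugate_apply_congr {A B : Matrix n n R} {p : n} (h : ∀ r ≠ p, A r = B r) (i : n) :
    A.adjugate i p = B.adjugate i p := by
  have updateRow_eq : A.updateRow p (Pi.single i 1) = B.updateRow p (Pi.single i 1) := by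
    ext r j
    rcases eq_or_ne r p with rfl | hr
    · simp
    · simp [updateRow_ne hr, h r hr]
  rw [adjugate_apply, adjugate_apply, updateRow_eq]

theorem derivation_adjugate_apply [CommSemiring k] [Algebra k R] (D : Derivation k R R)
    {M X Y : Matrix n n R} {p : n} (h : ∀ r ≠ p, ∀ j, D (M r j) = (X * M + M * Y) r j) (i : n) :
    D (M.adjugate i p) =
      (X.trace + Y.trace) * M.adjugate i p - (M.adjugate * X + Y * M.adjugate) i p := by
  let ι : R →+* R[ε] := TrivSqZeroExt.inlHom R R
  have rows : ∀ r ≠ p, (dualNumberLift D).mapMatrix M r =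
      ((1 + (ε : R[ε]) • ι.mapMatrix X) * ι.mapMatrix M * (1 + (ε : R[ε]) • ι.mapMatrix Y)) r := by
    intro r hr
    have expand :
        (1 + (ε : R[ε]) • ι.mapMatrix X) * ι.mapMatrix M * (1 + (ε : R[ε]) • ι.mapMatrix Y) =
          ι.mapMatrix M + (ε : R[ε]) • ι.mapMatrix (X * M + M * Y) := by
      simp only [Matrix.add_mul, Matrix.mul_add, smul_mul_assoc, mul_smul_comm, smul_smul,
        Matrix.one_mul, Matrix.mul_one, DualNumber.eps_mul_eps, zero_smul, map_add, map_mul,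
        add_zero, smul_add, add_assoc]
    rw [expand]
    ext j <;> simp [dualNumberLift, ι, h r hr j]
  have column := adjugate_apply_congr rows i
  have trace_map (Z : Matrix n n R) : (ι.mapMatrix Z).trace = ι Z.trace :=
    (AddMonoidHom.map_trace ι Z).symm
  rw [adjugate_one_add_smul_mul_mul DualNumber.eps_pow_two, trace_map, trace_map,
    ← RingHom.map_adjugate, ← RingHom.map_adjugate, ← map_mul, ← map_mul] at column
  simpa [dualNumberLift, ι, -Matrix.map_mul] using congrArg TrivSqZeroExt.snd column

theorem det_toBlocks₂₂_adjugate_mul_det (A : Matrix (m ⊕ n) (m ⊕ n) R) :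
    A.adjugate.toBlocks₂₂.det * A.det = A.toBlocks₁₁.det * A.det ^ Fintype.card n := by
  have block_triangular : A * fromBlocks 1 A.adjugate.toBlocks₁₂ 0 A.adjugate.toBlocks₂₂ =
      fromBlocks A.toBlocks₁₁ 0 A.toBlocks₂₁ (A.det • 1) := by
    ext i (j | j)
    · rcases i with i | i <;> simp [mul_apply, one_apply, toBlocks₁₁, toBlocks₂₁]
    · have := congrFun₂ A.mul_adjugate i (Sum.inr j)
      rcases i with i | i <;>
        simpa [mul_apply, one_apply, toBlocks₁₂, toBlocks₂₂] using this
  simpa [mul_comm] using congrArg det block_triangular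

theorem det_toBlocks₂₂_adjugate [Nonempty n] (A : Matrix (m ⊕ n) (m ⊕ n) R) :
    A.adjugate.toBlocks₂₂.det = A.toBlocks₁₁.det * A.det ^ (Fintype.card n - 1) := by
  let A' := mvPolynomialX (m ⊕ n) (m ⊕ n) ℤ
  have generic :
      A'.adjugate.toBlocks₂₂.det = A'.toBlocks₁₁.det * A'.det ^ (Fintype.card n - 1) := by
    apply mul_right_cancel₀ (det_mvPolynomialX_ne_zero (m ⊕ n) ℤ)
    rw [det_toBlocks₂₂_adjugate_mul_det, mul_assoc, pow_sub_one_mul Fintype.card_ne_zero]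
  let f : MvPolynomial ((m ⊕ n) × (m ⊕ n)) ℤ →+* R :=
    (MvPolynomial.aeval (R := ℤ) fun p => A p.1 p.2).toRingHom
  have hf : f.mapMatrix A' = A := mvPolynomialX_mapMatrix_aeval ℤ A
  have h := congrArg f generic
  rw [map_mul, map_pow, RingHom.map_det, RingHom.map_det, RingHom.map_det, hf] at h
  have e₂ : f.mapMatrix A'.adjugate.toBlocks₂₂ = A.adjugate.toBlocks₂₂ := by
    rw [← hf, ← RingHom.map_adjugate]; rfl
  have e₁ : f.mapMatrix A'.toBlocks₁₁ = A.toBlocks₁₁ := by rw [← hf]; rfl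
  rwa [e₁, e₂] at h

theorem desnanot_jacobi {n : ℕ} (A : Matrix (Fin (n + 2)) (Fin (n + 2)) R) :
    A.adjugate (Fin.last n).castSucc (Fin.last n).castSucc *
        A.adjugate (Fin.last (n + 1)) (Fin.last (n + 1)) -
      A.adjugate (Fin.last n).castSucc (Fin.last (n + 1)) *
        A.adjugate (Fin.last (n + 1)) (Fin.last n).castSucc =
    (A.submatrix (Fin.castAdd 2) (Fin.castAdd 2)).det * A.det := by
  let e : Fin n ⊕ Fin 2 ≃ Fin (n + 2) := finSumFinEquiv
  have e₀ : e (Sum.inr 0) = (Fin.last n).castSucc := by ext; simp [e]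
  have e₁ : e (Sum.inr 1) = Fin.last (n + 1) := by ext; simp [e]
  have h := det_toBlocks₂₂_adjugate (A.submatrix e e)
  rw [det_fin_two, adjugate_submatrix_equiv_self, det_submatrix_equiv_self, Fintype.card_fin,
    pow_one] at h
  have e_inl : (A.submatrix e e).toBlocks₁₁ = A.submatrix (Fin.castAdd 2) (Fin.castAdd 2) := rfl
  simpa only [toBlocks₂₂, of_apply, submatrix_apply, e₀, e₁, e_inl] using h

end Adjugate

section Hankel

variable {R m : Type*} [CommRing R]

/-- The Hankel matrix of size `N` of a sequence `c`, with indices starting at `0`. -/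
def hankelMatrix (c : ℕ → R) (N : ℕ) : Matrix (Fin N) (Fin N) R :=
  of fun i j => c (i + j)

/-- The strictly lower triangular Toeplitz matrix of size `N` with `c 0` on the first subdiagonal,
`c 1` on the second, and so on. Multiplying a Hankel matrix by it or by its transpose produces the
two halves of a convolution. -/
def strictLowerToeplitz (c : ℕ → R) (N : ℕ) : Matrix (Fin N) (Fin N) R :=
  of fun i j => if j < i then c (i - 1 - j) else 0

variable (R) in
/-- The nilpotent matrix with ones on the first superdiagonal, which moves the rows of a matrix up
by one place and replaces the last row by zero. -/
def upperShift (N : ℕ) : Matrix (Fin N) (Fin N) R :=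
  of fun i j => if (j : ℕ) = i + 1 then 1 else 0

theorem isSymm_hankelMatrix {R : Type*} (c : ℕ → R) (N : ℕ) : (hankelMatrix c N).IsSymm := by
  ext i j
  simp [hankelMatrix, add_comm]

theorem trace_strictLowerToeplitz (c : ℕ → R) (N : ℕ) : (strictLowerToeplitz c N).trace = 0 := by
  simp [trace, strictLowerToeplitz]

theorem trace_upperShift (N : ℕ) : (upperShift R N).trace = 0 := by
  simp [trace, upperShift]

theorem upperShift_mul_hankelMatrix_apply (c : ℕ → R) {N : ℕ} {i : Fin (N + 1)}
    (hi : i ≠ Fin.last N) (j : Fin (N + 1)) :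
    (upperShift R (N + 1) * hankelMatrix c (N + 1)) i j = c (i + j + 1) := by
  obtain ⟨i, rfl⟩ := Fin.exists_castSucc_eq.2 hi
  have unique_successor (s : Fin (N + 1)) : (s : ℕ) = i + 1 ↔ s = i.succ := by
    simp [Fin.ext_iff]
  simp [mul_apply, upperShift, hankelMatrix, unique_successor, add_right_comm]

theorem strictLowerToeplitz_mul_hankelMatrix_apply (c : ℕ → R) {N : ℕ} (i j : Fin N) :
    (strictLowerToeplitz c N * hankelMatrix c N) i j =
      ∑ s ∈ range i, c (i - 1 - s) * c (s + j) := by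
  have range_eq_filter : range i = (range N).filter (· < (i : ℕ)) := by grind
  rw [range_eq_filter, sum_filter, ← Fin.sum_univ_eq_sum_range
    (fun s => if s < (i : ℕ) then c (i - 1 - s) * c (s + j) else 0)]
  simp [mul_apply, strictLowerToeplitz, hankelMatrix]

theorem hankelMatrix_mul_transpose_strictLowerToeplitz (c : ℕ → R) (N : ℕ) :
    hankelMatrix c N * (strictLowerToeplitz c N)ᵀ =
      (strictLowerToeplitz c N * hankelMatrix c N)ᵀ := by
  rw [transpose_mul, (isSymm_hankelMatrix c N).eq]

theorem sum_range_add_mul (c : ℕ → R) (i j : ℕ) :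
    ∑ k ∈ range (i + j), c k * c (i + j - 1 - k) =
      ∑ s ∈ range i, c (i - 1 - s) * c (s + j) + ∑ s ∈ range j, c (j - 1 - s) * c (s + i) := by
  rw [sum_range_add, ← sum_range_reflect]
  congr 1 <;> refine sum_congr rfl fun s hs => ?_
  · rw [mem_range] at hs
    congr 2
    lia
  · rw [mul_comm, add_comm i s]
    congr 2
    lia

theorem mul_upperShift_apply_last {n : ℕ} (A : Matrix m (Fin (n + 2)) R) (i : m) :
    (A * upperShift R (n + 2)) i (Fin.last (n + 1)) = A i (Fin.last n).castSucc := by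
  have unique_predecessor (s : Fin (n + 2)) : n = s ↔ s = (Fin.last n).castSucc := by
    simp [Fin.ext_iff, eq_comm]
  simp [mul_apply, upperShift, unique_predecessor]

theorem mul_strictLowerToeplitz_apply_last (c : ℕ → R) {n : ℕ} (A : Matrix m (Fin (n + 1)) R)
    (i : m) : (A * strictLowerToeplitz c (n + 1)) i (Fin.last n) = 0 := by
  simp [mul_apply, strictLowerToeplitz, (Fin.le_last _).not_gt]

theorem transpose_strictLowerToeplitz_mul_apply_last (c : ℕ → R) {n : ℕ}
    (A : Matrix (Fin (n + 1)) m R) (j : m) :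
    ((strictLowerToeplitz c (n + 1))ᵀ * A) (Fin.last n) j = 0 := by
  simp [mul_apply, strictLowerToeplitz, (Fin.le_last _).not_gt]

theorem transpose_strictLowerToeplitz_mul_apply_castSucc_last (c : ℕ → R) {n : ℕ}
    (A : Matrix (Fin (n + 2)) m R) (j : m) :
    ((strictLowerToeplitz c (n + 2))ᵀ * A) (Fin.last n).castSucc j =
      c 0 * A (Fin.last (n + 1)) j := by
  rw [mul_apply, Fin.sum_univ_castSucc]
  simp [strictLowerToeplitz, Fin.castSucc_lt_castSucc_iff, (Fin.le_last _).not_gt]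

theorem adjugate_hankelMatrix_last_last (c : ℕ → R) (N : ℕ) :
    (hankelMatrix c (N + 1)).adjugate (Fin.last N) (Fin.last N) = (hankelMatrix c N).det := by
  rw [adjugate_fin_succ_eq_det_submatrix, Even.neg_one_pow ⟨_, rfl⟩, one_mul]
  congr 1
  ext i j
  simp [hankelMatrix]

variable {k : Type*} [CommSemiring k] [Algebra k R]

/-- The sequence `a` is generated from `a 0` by one side of the Toda recursion, with coupling `ψ`
and with `D` in the place of differentiation. -/
def IsTodaSequence (D : Derivation k R R) (ψ : R) (a : ℕ → R) : Prop :=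
  ∀ n, a (n + 1) = D (a n) + ψ * ∑ i ∈ range n, a i * a (n - 1 - i)

variable {D : Derivation k R R} {ψ : R} {a : ℕ → R}

theorem IsTodaSequence.derivation_hankelMatrix_apply (ha : IsTodaSequence D ψ a) {N : ℕ}
    {i : Fin (N + 1)} (hi : i ≠ Fin.last N) (j : Fin (N + 1)) :
    D (hankelMatrix a (N + 1) i j) =
      ((upperShift R (N + 1) - ψ • strictLowerToeplitz a (N + 1)) * hankelMatrix a (N + 1) +
        hankelMatrix a (N + 1) * (-ψ • (strictLowerToeplitz a (N + 1))ᵀ)) i j := by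
  have recursion := ha (i + j)
  rw [sum_range_add_mul, ← strictLowerToeplitz_mul_hankelMatrix_apply,
    ← strictLowerToeplitz_mul_hankelMatrix_apply, ← upperShift_mul_hankelMatrix_apply a hi]
    at recursion
  rw [Matrix.sub_mul, smul_mul_assoc, mul_smul_comm, hankelMatrix_mul_transpose_strictLowerToeplitz]
  simp only [Matrix.add_apply, Matrix.sub_apply, Matrix.smul_apply, transpose_apply, smul_eq_mul]
  change D (a (i + j)) = _
  linear_combination -recursion

theorem IsTodaSequence.derivation_adjugate_hankelMatrix_apply_last (ha : IsTodaSequence D ψ a)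
    (n : ℕ) (i : Fin (n + 2)) :
    D ((hankelMatrix a (n + 2)).adjugate i (Fin.last (n + 1))) =
      ψ * ((strictLowerToeplitz a (n + 2))ᵀ * (hankelMatrix a (n + 2)).adjugate)
          i (Fin.last (n + 1)) -
        (hankelMatrix a (n + 2)).adjugate i (Fin.last n).castSucc := by
  rw [derivation_adjugate_apply D fun r hr => ha.derivation_hankelMatrix_apply hr]
  simp only [trace_sub, trace_smul, trace_transpose, trace_upperShift, trace_strictLowerToeplitz,
    Matrix.mul_sub, mul_smul_comm, smul_mul_assoc, Matrix.add_apply, Matrix.sub_apply,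
    Matrix.smul_apply, mul_upperShift_apply_last,
    mul_strictLowerToeplitz_apply_last, smul_eq_mul]
  ring

theorem IsTodaSequence.derivation_det_hankelMatrix (ha : IsTodaSequence D ψ a) (n : ℕ) :
    D (hankelMatrix a (n + 1)).det =
      -(hankelMatrix a (n + 2)).adjugate (Fin.last n).castSucc (Fin.last (n + 1)) := by
  rw [← adjugate_hankelMatrix_last_last, ha.derivation_adjugate_hankelMatrix_apply_last,
    transpose_strictLowerToeplitz_mul_apply_last, mul_zero, zero_sub,
    (isSymm_hankelMatrix a (n + 2)).adjugate.apply]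

theorem IsTodaSequence.derivation_derivation_det_hankelMatrix (ha : IsTodaSequence D ψ a)
    (n : ℕ) :
    D (D (hankelMatrix a (n + 1)).det) =
      (hankelMatrix a (n + 2)).adjugate (Fin.last n).castSucc (Fin.last n).castSucc -
        a 0 * ψ * (hankelMatrix a (n + 1)).det := by
  rw [ha.derivation_det_hankelMatrix, map_neg, ha.derivation_adjugate_hankelMatrix_apply_last,
    transpose_strictLowerToeplitz_mul_apply_castSucc_last, adjugate_hankelMatrix_last_last]
  ring

theorem IsTodaSequence.toda_det_hankelMatrix (ha : IsTodaSequence D ψ a) (n : ℕ) :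
    D (D (hankelMatrix a (n + 1)).det) * (hankelMatrix a (n + 1)).det -
        D (hankelMatrix a (n + 1)).det ^ 2 =
      (hankelMatrix a (n + 2)).det * (hankelMatrix a n).det -
        a 0 * ψ * (hankelMatrix a (n + 1)).det ^ 2 := by
  have jacobi := desnanot_jacobi (hankelMatrix a (n + 2))
  have symm := (isSymm_hankelMatrix a (n + 2)).adjugate.apply
  rw [adjugate_hankelMatrix_last_last, symm (Fin.last n).castSucc (Fin.last (n + 1))] at jacobi
  have submatrix_eq : (hankelMatrix a (n + 2)).submatrix (Fin.castAdd 2) (Fin.castAdd 2) =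
    hankelMatrix a n := rfl
  rw [submatrix_eq] at jacobi
  rw [ha.derivation_derivation_det_hankelMatrix, ha.derivation_det_hankelMatrix]
  linear_combination jacobi

/-- The family `τ_N`, `N : ℤ`, of Hankel determinants of size `|N|`, built from `a` for `0 ≤ N` and
from `b` for `N < 0`. -/
def hankelTau (a b : ℕ → R) : ℤ → R
  | Int.ofNat N => (hankelMatrix a N).det
  | Int.negSucc N => (hankelMatrix b (N + 1)).det

theorem hankelTau_neg (a b : ℕ → R) (N : ℤ) : hankelTau a b (-N) = hankelTau b a N := by
  rcases N with (_ | N) | N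
  · simp [hankelTau]
  · rfl
  · rfl

theorem toda_hankelTau_natCast {a b : ℕ → R} (ha : IsTodaSequence D (b 0) a) (N : ℕ) :
    D (D (hankelTau a b N)) * hankelTau a b N - D (hankelTau a b N) ^ 2 =
      hankelTau a b (N + 1) * hankelTau a b (N - 1) - a 0 * b 0 * hankelTau a b N ^ 2 := by
  rcases N with _ | n
  · have tau_one (c d : ℕ → R) : hankelTau c d 1 = c 0 := det_fin_one _
    have tau_zero : hankelTau a b 0 = 1 := det_fin_zero
    simp [tau_one, tau_zero, hankelTau_neg]
  · have pred_succ : ((n + 1 : ℕ) : ℤ) - 1 = n := by simp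
    rw [pred_succ]
    exact ha.toda_det_hankelMatrix n

theorem toda_hankelTau {a b : ℕ → R} (ha : IsTodaSequence D (b 0) a)
    (hb : IsTodaSequence D (a 0) b) (N : ℤ) :
    D (D (hankelTau a b N)) * hankelTau a b N - D (hankelTau a b N) ^ 2 =
      hankelTau a b (N + 1) * hankelTau a b (N - 1) - a 0 * b 0 * hankelTau a b N ^ 2 := by
  obtain ⟨n, rfl | rfl⟩ := N.eq_nat_or_neg
  · exact toda_hankelTau_natCast ha n
  · have add_one_eq : -(n : ℤ) + 1 = -(n - 1) := by ring
    have sub_one_eq : -(n : ℤ) - 1 = -(n + 1) := by ring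
    rw [add_one_eq, sub_one_eq, hankelTau_neg, hankelTau_neg, hankelTau_neg]
    linear_combination toda_hankelTau_natCast hb n

end Hankel

section Smooth

variable (𝕜 A : Type*) [NontriviallyNormedField 𝕜] [NormedCommRing A] [NormedAlgebra 𝕜 A]

/-- The algebra of infinitely differentiable functions `𝕜 → A` under pointwise operations. -/
def smoothFunctions : Subalgebra 𝕜 (𝕜 → A) where
  carrier := {f | ContDiff 𝕜 ∞ f}
  mul_mem' hf hg := (Set.mem_ofPred.1 hf).mul (Set.mem_ofPred.1 hg)
  add_mem' hf hg := (Set.mem_ofPred.1 hf).add (Set.mem_ofPred.1 hg)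
  algebraMap_mem' c := Set.mem_ofPred.2 (contDiff_const (c := algebraMap 𝕜 A c))

variable {𝕜 A}

theorem mem_smoothFunctions {f : 𝕜 → A} : f ∈ smoothFunctions 𝕜 A ↔ ContDiff 𝕜 ∞ f := Iff.rfl

theorem deriv_mem_smoothFunctions {f : 𝕜 → A} (hf : f ∈ smoothFunctions 𝕜 A) :
    deriv f ∈ smoothFunctions 𝕜 A :=
  mem_smoothFunctions.2 (contDiff_infty_iff_deriv.1 (mem_smoothFunctions.1 hf)).2

theorem differentiableAt_smoothFunctions (f : smoothFunctions 𝕜 A) (x : 𝕜) :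
    DifferentiableAt 𝕜 (f : 𝕜 → A) x :=
  (contDiff_infty_iff_deriv.1 (mem_smoothFunctions.1 f.2)).1 x

variable (𝕜 A) in
/-- Differentiation, as a derivation of the algebra of smooth functions. -/
noncomputable def smoothDerivation : Derivation 𝕜 (smoothFunctions 𝕜 A) (smoothFunctions 𝕜 A) :=
  .mk'
    { toFun f := ⟨deriv f, deriv_mem_smoothFunctions f.2⟩
      map_add' f g := Subtype.ext <| funext fun x =>
        deriv_add (differentiableAt_smoothFunctions f x) (differentiableAt_smoothFunctions g x)
      map_smul' c f := Subtype.ext <| funext fun x =>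
        deriv_const_smul c (differentiableAt_smoothFunctions f x) }
    fun f g => Subtype.ext <| funext fun x => by
      have := deriv_mul (differentiableAt_smoothFunctions f x)
        (differentiableAt_smoothFunctions g x)
      simpa [mul_comm, add_comm] using this

theorem coe_det_hankelMatrix (c : ℕ → smoothFunctions 𝕜 A) (N : ℕ) :
    ((hankelMatrix c N).det : 𝕜 → A) =
      fun x => (of fun i j : Fin N => (c (i + j) : 𝕜 → A) x).det := by
  funext x
  exact RingHom.map_det
    ((Pi.evalRingHom (fun _ : 𝕜 => A) x).comp (smoothFunctions 𝕜 A).val.toRingHom) _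

theorem isTodaSequence_smoothDerivation {ψ : smoothFunctions 𝕜 A} {a : ℕ → smoothFunctions 𝕜 A}
    (ha : ∀ n, (a (n + 1) : 𝕜 → A) = deriv (a n : 𝕜 → A) +
      fun x => (ψ : 𝕜 → A) x * ∑ k ∈ range n, (a k : 𝕜 → A) x * (a (n - 1 - k) : 𝕜 → A) x) :
    IsTodaSequence (smoothDerivation 𝕜 A) ψ a := fun n => Subtype.ext <| by
  rw [ha n]
  ext x
  simp [smoothDerivation]

theorem contDiff_of_toda_recursion {ψ : 𝕜 → A} (hψ : ContDiff 𝕜 ∞ ψ) {a : ℕ → 𝕜 → A}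
    (ha0 : ContDiff 𝕜 ∞ (a 0))
    (ha : ∀ n, a (n + 1) =
      deriv (a n) + fun x => ψ x * ∑ k ∈ range n, a k x * a (n - 1 - k) x) (n : ℕ) :
    ContDiff 𝕜 ∞ (a n) := by
  induction n using Nat.strong_induction_on with
  | _ n ih =>
    rcases n with _ | n
    · exact ha0
    · rw [ha]
      refine (contDiff_infty_iff_deriv.1 (ih n n.lt_succ_self)).2.add (hψ.mul ?_)
      refine ContDiff.sum fun k hk => ?_
      rw [mem_range] at hk
      exact (ih k (by lia)).mul (ih (n - 1 - k) (by lia))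

theorem toda_hankel_determinant_formula_general
    {φ ψ : 𝕜 → A} (hφ : ContDiff 𝕜 ∞ φ) (hψ : ContDiff 𝕜 ∞ ψ)
    {a b : ℕ → 𝕜 → A}
    (ha0 : a 0 = φ)
    (ha : ∀ n : ℕ, a (n + 1) =
      deriv (a n) + fun x => ψ x * ∑ k ∈ range n, a k x * a (n - 1 - k) x)
    (hb0 : b 0 = ψ)
    (hb : ∀ n : ℕ, b (n + 1) =
      deriv (b n) + fun x => φ x * ∑ k ∈ range n, b k x * b (n - 1 - k) x)
    {τ : ℤ → 𝕜 → A}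
    (hτpos : ∀ N : ℕ, τ ((N : ℤ) + 1) =
      fun x => (of fun i j : Fin (N + 1) => a (i.1 + j.1) x).det)
    (hτ0 : τ 0 = 1)
    (hτneg : ∀ N : ℕ, τ (-((N : ℤ) + 1)) =
      fun x => (of fun i j : Fin (N + 1) => b (i.1 + j.1) x).det)
    (N : ℤ) (x : 𝕜) :
    deriv (deriv (τ N)) x * τ N x - (deriv (τ N) x) ^ 2 =
      τ (N + 1) x * τ (N - 1) x - φ x * ψ x * (τ N x) ^ 2 := by
  subst ha0 hb0
  lift a to ℕ → smoothFunctions 𝕜 A using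
    fun n => mem_smoothFunctions.2 (contDiff_of_toda_recursion hψ hφ ha n)
  lift b to ℕ → smoothFunctions 𝕜 A using
    fun n => mem_smoothFunctions.2 (contDiff_of_toda_recursion hφ hψ hb n)
  have τ_eq (N : ℤ) : τ N = hankelTau a b N := by
    rcases N with (_ | n) | n
    · exact hτ0.trans (by simp [hankelTau])
    · exact (hτpos n).trans (coe_det_hankelMatrix a (n + 1)).symm
    · exact (hτneg n).trans (coe_det_hankelMatrix b (n + 1)).symm
  simp only [τ_eq]
  have toda := toda_hankelTau (isTodaSequence_smoothDerivation ha)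
    (isTodaSequence_smoothDerivation hb) N
  exact congrFun (congrArg Subtype.val toda) x

end Smooth

/-- **Hankel determinant formula for the Toda equation** (Proposition 2.1).
For entire `φ, ψ`, the Hankel determinants `τ_N` built from the sequences `a_n, b_n`
defined by the recursions `a_0 = φ`, `a_n = a_{n-1}' + ψ·∑_{i+j=n-2} a_i a_j`,
`b_0 = ψ`, `b_n = b_{n-1}' + φ·∑_{i+j=n-2} b_i b_j` satisfy the Toda equation
`τ_N'' τ_N − (τ_N')² = τ_{N+1} τ_{N-1} − φψ τ_N²`. -/
theorem toda_hankel_determinant_formula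
    (φ ψ : ℂ → ℂ) (hφ : Differentiable ℂ φ) (hψ : Differentiable ℂ ψ)
    (a b : ℕ → ℂ → ℂ)
    (ha0 : a 0 = φ)
    (ha : ∀ n : ℕ, a (n + 1) =
      deriv (a n) + fun x => ψ x * ∑ k ∈ Finset.range n, a k x * a (n - 1 - k) x)
    (hb0 : b 0 = ψ)
    (hb : ∀ n : ℕ, b (n + 1) =
      deriv (b n) + fun x => φ x * ∑ k ∈ Finset.range n, b k x * b (n - 1 - k) x)
    (τ : ℤ → ℂ → ℂ)
    (hτpos : ∀ N : ℕ, τ ((N : ℤ) + 1) =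
      fun x => (Matrix.of fun i j : Fin (N + 1) => a (i.1 + j.1) x).det)
    (hτ0 : τ 0 = 1)
    (hτneg : ∀ N : ℕ, τ (-((N : ℤ) + 1)) =
      fun x => (Matrix.of fun i j : Fin (N + 1) => b (i.1 + j.1) x).det) :
    ∀ (N : ℤ) (x : ℂ),
      deriv (deriv (τ N)) x * τ N x - (deriv (τ N) x) ^ 2 =
        τ (N + 1) x * τ (N - 1) x - φ x * ψ x * (τ N x) ^ 2 := by
  exact toda_hankel_determinant_formula_general hφ.contDiff hψ.contDiff ha0 ha hb0 hb
    hτpos hτ0 hτneg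
end

section
/- Let α ∈ ℂ and let φ, ψ : ℂ → ℂ be entire functions satisfying ψ''(x) = (2x − 2ψ(x)φ(x))·ψ(x), φ''(x) = (2x − 2ψ(x)φ(x))·φ(x), and φ'(x)ψ(x) − φ(x)ψ'(x) = 2α for all x ∈ ℂ. Define a_n, b_n by a_0 = φ, a_n = a_{n-1}' + ψ·(∑_{i+j=n-2, i,j≥0} a_i a_j), b_0 = ψ, b_n = b_{n-1}' + φ·(∑_{i+j=n-2, i,j≥0} b_i b_j). Then for every n ≥ 0 and all x ∈ ℂ: (ψ·a_{n+2} − ψ'·a_{n+1})'(x) = 2(n+1)·ψ(x)·a_n(x), and (φ·b_{n+2} − φ'·b_{n+1})'(x) = 2(n+1)·φ(x)·b_n(x). -/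
/-!
Let `G = ∑ aₙ Xⁿ`. The recursion for `aₙ` is the Riccati equation `X G' = G - φ - X² ψ G²`, where
the prime differentiates coefficients. With `q = 2x - 2ψφ`, this equation has a companion
`G' = φ' + X q G - X² ψ' G² + 2 X² ∂(X G)/∂X`: by the equations for `φ` and `ψ`, the difference `R`
of its two sides satisfies `R = X (R' + 2 X ψ G R)`, which forces `R = 0` coefficient by
coefficient. Eliminating `G²` between the two equations gives
`((ψ - X ψ') G)' = (φ ψ)' + 2 X² ψ ∂(X G)/∂X`, whose coefficients are the asserted relations.
Only the Leibniz rule is used, so the argument runs in any commutative ring with a derivation; the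
theorem is the case of entire functions, and the relations for `bₙ` follow by exchanging `φ` and
`ψ`.
-/

open PowerSeries

section CoeffwiseDerivation

variable {R A : Type*} [CommSemiring R] [CommRing A] [Algebra R A]

/-- The derivation of `A⟦X⟧` that applies the derivation `d` of `A` to every coefficient; it treats
`X` as a constant. It serves to differentiate generating functions in the variable of their
coefficients. -/
noncomputable def coeffwiseDerivation (d : Derivation R A A) : Derivation R A⟦X⟧ A⟦X⟧ :=
  Derivation.mk'
    { toFun := fun f => mk fun n => d (coeff n f)
      map_add' := fun f g => by ext n; simp
      map_smul' := fun r f => by ext n; simp }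
    fun f g => by
      ext n
      simp only [LinearMap.coe_mk, AddHom.coe_mk, coeff_mk, smul_eq_mul, map_add, coeff_mul,
        map_sum, Derivation.leibniz, Finset.sum_add_distrib]
      congr 1
      exact Finset.Nat.sum_antidiagonal_swap.symm

variable (d : Derivation R A A)

@[simp]
theorem coeff_coeffwiseDerivation (f : A⟦X⟧) (n : ℕ) :
    coeff n (coeffwiseDerivation d f) = d (coeff n f) := by
  simp [coeffwiseDerivation]

@[simp]
theorem coeffwiseDerivation_C (r : A) : coeffwiseDerivation d (C r) = C (d r) := by
  ext n
  simp [coeff_C, apply_ite d]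

@[simp]
theorem coeffwiseDerivation_X : coeffwiseDerivation d (X : A⟦X⟧) = 0 := by
  ext n
  simp [coeff_X, apply_ite d]

theorem coeffwiseDerivation_derivative (f : A⟦X⟧) :
    coeffwiseDerivation d (d⁄dX A f) = d⁄dX A (coeffwiseDerivation d f) := by
  ext n
  simp [coeff_derivative, mul_comm]

theorem eq_zero_of_eq_X_mul_coeffwiseDerivation_add {f h : A⟦X⟧}
    (hf : f = X * (coeffwiseDerivation d f + h * f)) : f = 0 := by
  suffices ∀ n, ∀ k < n, coeff k f = 0 by
    ext k
    simpa using this (k + 1) k k.lt_succ_self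
  intro n
  induction n with
  | zero => simp
  | succ n ih =>
    rintro (_ | k) hk
    · rw [hf, coeff_zero_X_mul]
    · have hprod : coeff k (h * f) = 0 := by
        rw [coeff_mul]
        refine Finset.sum_eq_zero fun p hp => ?_
        rw [ih p.2 (by have := Finset.HasAntidiagonal.antidiagonal.snd_le hp; lia), mul_zero]
      rw [hf, coeff_succ_X_mul, map_add, coeff_coeffwiseDerivation, ih k (by lia), hprod, map_zero,
        add_zero]

end CoeffwiseDerivation

section DifferentialRing

variable {R A : Type*} [CommSemiring R] [CommRing A] [Algebra R A] {d : Derivation R A A}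
  {t q φ ψ : A} {a : ℕ → A}

theorem X_mul_coeffwiseDerivation_mk (ha0 : a 0 = φ)
    (ha : ∀ n, a (n + 1) = d (a n) + ψ * ∑ k ∈ Finset.range n, a k * a (n - 1 - k)) :
    X * coeffwiseDerivation d (mk a) = mk a - C φ - X ^ 2 * C ψ * mk a ^ 2 := by
  have hsq : X ^ 2 * C ψ * mk a ^ 2 = X * (X * (C ψ * (mk a * mk a))) := by ring
  rw [hsq]
  ext n
  rcases n with _ | _ | n
  · simp [ha0]
  · simp [coeff_succ_X_mul, ha]
  · rw [map_sub, map_sub]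
    simp only [coeff_succ_X_mul, coeff_C_mul]
    rw [coeff_mul]
    simp [ha (n + 1), Finset.Nat.sum_antidiagonal_eq_sum_range_succ_mk]

theorem coeffwiseDerivation_eq_of_riccati {G : A⟦X⟧} (hq : d q = 2 - 2 * d (ψ * φ))
    (hψ : d (d ψ) = q * ψ) (hφ : d (d φ) = q * φ)
    (hG : X * coeffwiseDerivation d G = G - C φ - X ^ 2 * C ψ * G ^ 2) :
    coeffwiseDerivation d G = C (d φ) + X * C q * G - X ^ 2 * C (d ψ) * G ^ 2
      + 2 * X ^ 2 * d⁄dX A (X * G) := by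
  have hD_two : coeffwiseDerivation d 2 = 0 :=
    mod_cast (coeffwiseDerivation d).map_natCast 2
  have hG_D : X * coeffwiseDerivation d (coeffwiseDerivation d G) = coeffwiseDerivation d G
      - C (d φ) - X ^ 2 * (C (d ψ) * G ^ 2 + 2 * C ψ * G * coeffwiseDerivation d G) := by
    have h := congrArg (coeffwiseDerivation d) hG
    simp only [map_sub, Derivation.leibniz, pow_two, smul_eq_mul, coeffwiseDerivation_C,
      coeffwiseDerivation_X] at h
    linear_combination h
  have hG_X : coeffwiseDerivation d G + X * d⁄dX A (coeffwiseDerivation d G) =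
      d⁄dX A G - 2 * X * C ψ * G ^ 2 - 2 * X ^ 2 * C ψ * G * d⁄dX A G := by
    have h := congrArg (d⁄dX A) hG
    simp only [map_sub, Derivation.leibniz, pow_two, smul_eq_mul, derivative_C, derivative_X] at h
    linear_combination h
  rw [← sub_eq_zero]
  apply eq_zero_of_eq_X_mul_coeffwiseDerivation_add d (h := 2 * X * C ψ * G)
  simp only [map_sub, map_add, map_mul, map_ofNat, Derivation.leibniz, pow_two, smul_eq_mul,
    mul_one, hD_two, derivative_X, coeffwiseDerivation_X, coeffwiseDerivation_C,
    coeffwiseDerivation_derivative, hq, hψ, hφ]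
  linear_combination (X * C q - 2 * X ^ 2 * C (d ψ) * G) * hG - hG_D + 2 * X ^ 3 * hG_X

theorem coeffwiseDerivation_C_sub_X_mul_C_mul {G : A⟦X⟧} (hq : d q = 2 - 2 * d (ψ * φ))
    (hψ : d (d ψ) = q * ψ) (hφ : d (d φ) = q * φ)
    (hG : X * coeffwiseDerivation d G = G - C φ - X ^ 2 * C ψ * G ^ 2) :
    coeffwiseDerivation d ((C ψ - X * C (d ψ)) * G) =
      C (d (ψ * φ)) + 2 * X ^ 2 * C ψ * d⁄dX A (X * G) := by
  have hG' := coeffwiseDerivation_eq_of_riccati hq hψ hφ hG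
  simp only [map_sub, map_add, map_mul, Derivation.leibniz (coeffwiseDerivation d),
    Derivation.leibniz d, smul_eq_mul, coeffwiseDerivation_X, coeffwiseDerivation_C, hψ]
  linear_combination C ψ * hG' - C (d ψ) * hG

theorem derivation_mul_sub_derivation_mul (hq : d q = 2 - 2 * d (ψ * φ))
    (hψ : d (d ψ) = q * ψ) (hφ : d (d φ) = q * φ) (ha0 : a 0 = φ)
    (ha : ∀ n, a (n + 1) = d (a n) + ψ * ∑ k ∈ Finset.range n, a k * a (n - 1 - k)) (n : ℕ) :
    d (ψ * a (n + 2) - d ψ * a (n + 1)) = 2 * (n + 1) * ψ * a n := by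
  have h := congrArg (coeff (n + 2))
    (coeffwiseDerivation_C_sub_X_mul_C_mul hq hψ hφ (X_mul_coeffwiseDerivation_mk ha0 ha))
  have hleft : coeff (n + 2) ((C ψ - X * C (d ψ)) * mk a) = ψ * a (n + 2) - d ψ * a (n + 1) := by
    rw [sub_mul, mul_assoc, map_sub, coeff_C_mul, coeff_succ_X_mul, coeff_C_mul, coeff_mk, coeff_mk]
  have hright : coeff (n + 2) (2 * X ^ 2 * C ψ * d⁄dX A (X * mk a)) =
      2 * (n + 1) * ψ * a n := by
    have hX : 2 * X ^ 2 * C ψ * d⁄dX A (X * mk a) =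
        X ^ 2 * (C ψ * (d⁄dX A (X * mk a) + d⁄dX A (X * mk a))) := by ring
    rw [hX, coeff_X_pow_mul, coeff_C_mul, map_add, coeff_derivative, coeff_succ_X_mul, coeff_mk]
    ring
  rwa [coeff_coeffwiseDerivation, hleft, map_add, hright, coeff_C, if_neg (by lia), zero_add] at h

theorem auxiliary_recursion_relations_general {b : ℕ → A} (ht : d t = 1)
    (hψ : d (d ψ) = (2 * t - 2 * ψ * φ) * ψ) (hφ : d (d φ) = (2 * t - 2 * ψ * φ) * φ)
    (ha0 : a 0 = φ)
    (ha : ∀ n, a (n + 1) = d (a n) + ψ * ∑ k ∈ Finset.range n, a k * a (n - 1 - k))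
    (hb0 : b 0 = ψ)
    (hb : ∀ n, b (n + 1) = d (b n) + φ * ∑ k ∈ Finset.range n, b k * b (n - 1 - k)) (n : ℕ) :
    d (ψ * a (n + 2) - d ψ * a (n + 1)) = 2 * (n + 1) * ψ * a n ∧
      d (φ * b (n + 2) - d φ * b (n + 1)) = 2 * (n + 1) * φ * b n := by
  have hq : d (2 * t - 2 * ψ * φ) = 2 - 2 * d (ψ * φ) := by
    have hd_two : d 2 = 0 := mod_cast d.map_natCast 2
    rw [mul_assoc, map_sub, d.leibniz, d.leibniz 2, hd_two, ht]
    simp only [smul_eq_mul, mul_zero, add_zero, mul_one]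
  exact ⟨derivation_mul_sub_derivation_mul hq hψ hφ ha0 ha n,
    derivation_mul_sub_derivation_mul (mul_comm ψ φ ▸ hq) hφ hψ hb0 hb n⟩

end DifferentialRing

section EntireFunctions

/-- The algebra of entire functions, the differential ring to which the algebraic identities are
applied. -/
def entireFunctions : Subalgebra ℂ (ℂ → ℂ) where
  carrier := {f | Differentiable ℂ f}
  mul_mem' hf hg := hf.mul hg
  add_mem' hf hg := hf.add hg
  algebraMap_mem' c := differentiable_const c

/-- Complex differentiation as a derivation of the algebra of entire functions. -/
noncomputable def entireDerivation : Derivation ℂ entireFunctions entireFunctions :=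
  Derivation.mk'
    { toFun := fun f => ⟨deriv f, f.2.deriv⟩
      map_add' := fun f g => by
        ext x
        exact deriv_add (f.2 x) (g.2 x)
      map_smul' := fun c f => by
        ext x
        exact deriv_const_smul c (f.2 x) }
    fun f g => by
      ext x
      refine (deriv_mul (f.2 x) (g.2 x)).trans ?_
      simp only [LinearMap.coe_mk, AddHom.coe_mk, smul_eq_mul, AddMemClass.coe_add,
        MulMemClass.coe_mul, Pi.add_apply, Pi.mul_apply]
      ring

@[simp]
theorem coe_entireDerivation (f : entireFunctions) :
    (entireDerivation f : ℂ → ℂ) = deriv f := rfl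

theorem mem_entireFunctions_of_recursion {f g : ℂ → ℂ} {a : ℕ → ℂ → ℂ}
    (hf : f ∈ entireFunctions) (hg : g ∈ entireFunctions) (ha0 : a 0 = f)
    (ha : ∀ n, a (n + 1) =
      deriv (a n) + fun x => g x * ∑ k ∈ Finset.range n, a k x * a (n - 1 - k) x) (n : ℕ) :
    a n ∈ entireFunctions := by
  induction n using Nat.strong_induction_on with
  | _ n ih =>
    cases n with
    | zero => rwa [ha0]
    | succ n =>
      rw [ha n]
      refine (ih n n.lt_succ_self).deriv.add (hg.mul (Differentiable.fun_sum fun k hk => ?_))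
      have hk : k < n := Finset.mem_range.1 hk
      exact (ih k (by lia)).mul (ih (n - 1 - k) (by lia))

end EntireFunctions

/-- **Lemma 2.4.** Under the conditions `ψ''/ψ = φ''/φ = −2ψφ + 2x` and `φ'ψ − φψ' = 2α`,
the entries `a_n, b_n` of the Hankel determinant formula satisfy the auxiliary recursions
`(ψ a_{n+2} − ψ' a_{n+1})' = 2(n+1) ψ a_n` and `(φ b_{n+2} − φ' b_{n+1})' = 2(n+1) φ b_n`. -/
theorem auxiliary_recursion_relations
    (α : ℂ) (φ ψ : ℂ → ℂ) (hφ : Differentiable ℂ φ) (hψ : Differentiable ℂ ψ)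
    (hψ'' : ∀ x : ℂ, deriv (deriv ψ) x = (2 * x - 2 * ψ x * φ x) * ψ x)
    (hφ'' : ∀ x : ℂ, deriv (deriv φ) x = (2 * x - 2 * ψ x * φ x) * φ x)
    (hW : ∀ x : ℂ, deriv φ x * ψ x - φ x * deriv ψ x = 2 * α)
    (a b : ℕ → ℂ → ℂ)
    (ha0 : a 0 = φ)
    (ha : ∀ n : ℕ, a (n + 1) =
      deriv (a n) + fun x => ψ x * ∑ k ∈ Finset.range n, a k x * a (n - 1 - k) x)
    (hb0 : b 0 = ψ)
    (hb : ∀ n : ℕ, b (n + 1) =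
      deriv (b n) + fun x => φ x * ∑ k ∈ Finset.range n, b k x * b (n - 1 - k) x) :
    ∀ (n : ℕ) (x : ℂ),
      deriv (fun y => ψ y * a (n + 2) y - deriv ψ y * a (n + 1) y) x
          = 2 * ((n : ℂ) + 1) * ψ x * a n x
        ∧
      deriv (fun y => φ y * b (n + 2) y - deriv φ y * b (n + 1) y) x
          = 2 * ((n : ℂ) + 1) * φ x * b n x := by
  intro n x
  have ha_entire := mem_entireFunctions_of_recursion hφ hψ ha0 ha
  have hb_entire := mem_entireFunctions_of_recursion hψ hφ hb0 hb
  lift a to ℕ → entireFunctions using ha_entire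
  lift b to ℕ → entireFunctions using hb_entire
  lift φ to entireFunctions using hφ
  lift ψ to entireFunctions using hψ
  obtain ⟨hA, hB⟩ := auxiliary_recursion_relations_general (d := entireDerivation)
    (t := ⟨id, differentiable_id⟩) (φ := φ) (ψ := ψ) (a := a) (b := b)
    (by ext y; simp) (Subtype.ext (funext hψ'')) (Subtype.ext (funext hφ''))
    (Subtype.ext ha0) (fun m => by ext y; simpa using congrFun (ha m) y)
    (Subtype.ext hb0) (fun m => by ext y; simpa using congrFun (hb m) y) n
  exact ⟨congrFun (congrArg Subtype.val hA) x, congrFun (congrArg Subtype.val hB) x⟩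
end
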